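/- arXiv:2510.23777 — 2 statements merged into one kernel-verified Lean document; each statement's English description precedes it below -/
import Mathlib

section
/- Let W be a subspace of V and G a finite subset of W \ {0} whose linear span is W. If for every f ∈ V any two remainders of f modulo G are equal, then G is a Gröbner basis for W. -/
/-!
Each simple reduction modulo `g` clears the coordinate at the leading index of `g` and leaves all
earlier coordinates alone, so the support drops lexicographically and remainders exist
(`exists_isRemainder`). If `g ∈ G`, then `f` and `f + c • g` each reduce, in at most one step, to
the vector obtained by clearing the leading coordinate of `g`; existence and uniqueness of
remainders then show that `f + c • g` reduces to `0` as soon as `f` does. As `G` spans `W`, every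
`f ∈ W` reduces to `0`. Finally, if the leading index of `f` is not that of any `g ∈ G`, reductions never change
the leading index (`isLp_of_reducesTo`), so such an `f` cannot reduce to `0`.
-/

/-!
Gröbner basis theory for a finite-dimensional vector space `V` over a field `k`
with a fixed ordered basis.  We model `V` as `Fin n → k`, the basis being the
standard basis `v_0, v_1, …, v_{n-1}` (coordinates), ordered `v_0 > v_1 > ⋯`.
-/

variable {k : Type*} [Field k] {n : ℕ}

/-- `IsLp v i` : the basis element indexed by `i` is the leading basis element of `v`,
i.e. `i` is the least index whose coefficient in `v` is nonzero
(the basis is ordered decreasingly along indices). -/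
def IsLp (v : Fin n → k) (i : Fin n) : Prop :=
  v i ≠ 0 ∧ ∀ j : Fin n, j < i → v j = 0

/-- `f` simply reduces to `r` modulo `g`. -/
def SimplyReduces (g f r : Fin n → k) : Prop :=
  ∃ i : Fin n, IsLp g i ∧ f i ≠ 0 ∧ r = f - (f i / g i) • g

/-- One step of reduction modulo (some element of) the finite set `G`. -/
def RedStep (G : Finset (Fin n → k)) (f r : Fin n → k) : Prop :=
  ∃ g ∈ G, SimplyReduces g f r

/-- `f →_G+ r` : `f` reduces to `r` by a finite (possibly empty) sequence of
simple reductions modulo elements of `G`. -/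
def ReducesTo (G : Finset (Fin n → k)) (f r : Fin n → k) : Prop :=
  Relation.ReflTransGen (RedStep G) f r

/-- `r` is reduced relative to `G`. -/
def ReducedRel (G : Finset (Fin n → k)) (r : Fin n → k) : Prop :=
  r = 0 ∨ ∀ g ∈ G, ∀ r' : Fin n → k, ¬ SimplyReduces g r r'

/-- `r` is a remainder of `f` modulo `G`. -/
def IsRemainder (G : Finset (Fin n → k)) (f r : Fin n → k) : Prop :=
  ReducesTo G f r ∧ ReducedRel G r

/-- `G` is a Gröbner basis for `W` : every nonzero `f ∈ W` has the same leading
basis element as some `g ∈ G`. -/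
def IsGroebnerBasis (W : Submodule k (Fin n → k)) (G : Finset (Fin n → k)) : Prop :=
  ∀ f ∈ W, f ≠ 0 → ∃ g ∈ G, ∃ i : Fin n, IsLp f i ∧ IsLp g i

theorem exists_isLp {g : Fin n → k} (hg : g ≠ 0) : ∃ i, IsLp g i := by
  obtain ⟨j, hj⟩ := Function.ne_iff.mp hg
  obtain ⟨i, hi, hmin⟩ := WellFounded.has_min (wellFounded_lt (α := Fin n)) {i | g i ≠ 0} ⟨j, hj⟩
  exact ⟨i, hi, fun j hji => by_contra fun h => hmin j h hji⟩

open Classical in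
/-- The indicator of the support, ordered lexicographically: the termination measure for
reduction. -/
noncomputable def supportLex (f : Fin n → k) : Lex (Fin n → ℕ) :=
  toLex fun i => if f i = 0 then 0 else 1

open Classical in
theorem supportLex_lt {G : Finset (Fin n → k)} {f r : Fin n → k} (h : RedStep G f r) :
    supportLex r < supportLex f := by
  obtain ⟨g, -, i, ⟨hgi, hlt⟩, hfi, rfl⟩ := h
  refine ⟨i, fun j hj => ?_, ?_⟩
  · have hj' : (f - (f i / g i) • g) j = f j := by
      have hgj : g j = 0 := hlt j hj
      simp [hgj]
    exact congrArg (fun a : k => if a = 0 then 0 else 1) hj'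
  · simp [supportLex, hgi, hfi]

theorem exists_isRemainder (G : Finset (Fin n → k)) (f : Fin n → k) :
    ∃ r, IsRemainder G f r := by
  have wf : WellFounded fun a b : Fin n → k => supportLex a < supportLex b :=
    InvImage.wf supportLex wellFounded_lt
  induction f using wf.induction with
  | _ f ih =>
    by_cases h : ∃ r, RedStep G f r
    · obtain ⟨f', hf'⟩ := h
      obtain ⟨r, hr, hred⟩ := ih f' (supportLex_lt hf')
      exact ⟨r, .head hf' hr, hred⟩
    · exact ⟨f, .refl, .inr fun g hg s hs => h ⟨s, g, hg, hs⟩⟩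

/-- Clearing the leading coordinate of `g ∈ G` is a reduction of length at most one. -/
theorem reducesTo_clear {G : Finset (Fin n → k)} {g : Fin n → k} (hg : g ∈ G) {i : Fin n}
    (hi : IsLp g i) (f : Fin n → k) : ReducesTo G f (f - (f i / g i) • g) := by
  by_cases hf : f i = 0
  · rw [hf, zero_div, zero_smul, sub_zero]
    exact .refl
  · exact .single ⟨g, hg, i, hi, hf, rfl⟩

theorem isLp_of_reducesTo {G : Finset (Fin n → k)} {f r : Fin n → k} {i : Fin n}
    (hi : IsLp f i) (hG : ∀ g ∈ G, ¬ IsLp g i) (h : ReducesTo G f r) : IsLp r i := by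
  induction h with
  | refl => exact hi
  | tail _ hstep ih =>
    obtain ⟨g, hg, j, hj, hne, rfl⟩ := hstep
    have hij : i < j := by
      rcases lt_trichotomy i j with h | rfl | h
      · exact h
      · exact absurd hj (hG g hg)
      · exact absurd (ih.2 j h) hne
    refine ⟨by simpa [hj.2 i hij] using ih.1, fun l hl => ?_⟩
    simp [ih.2 l hl, hj.2 l (hl.trans hij)]

theorem groebner_of_remainders_unique (W : Submodule k (Fin n → k))
    (G : Finset (Fin n → k)) (hG : ∀ g ∈ G, g ∈ W ∧ g ≠ 0)
    (hspan : Submodule.span k (G : Set (Fin n → k)) = W)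
    (huniq : ∀ f r₁ r₂ : Fin n → k, IsRemainder G f r₁ → IsRemainder G f r₂ → r₁ = r₂) :
    IsGroebnerBasis W G := by
  have add_smul_reduces : ∀ g ∈ G, ∀ (c : k) (f : Fin n → k), ReducesTo G f 0 →
      ReducesTo G (c • g + f) 0 := by
    intro g hg c f hf
    obtain ⟨i, hi⟩ := exists_isLp (hG g hg).2
    have hgi := hi.1
    have heq : (c • g + f) - ((c • g + f) i / g i) • g = f - (f i / g i) • g := by
      ext j
      simp only [Pi.sub_apply, Pi.add_apply, Pi.smul_apply, smul_eq_mul]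
      field_simp
      ring
    have h := reducesTo_clear hg hi (c • g + f)
    rw [heq] at h
    obtain ⟨r, hr, hred⟩ := exists_isRemainder G (f - (f i / g i) • g)
    -- `r` is also a remainder of `f`, hence zero by uniqueness.
    obtain rfl : r = 0 :=
      huniq f r 0 ⟨(reducesTo_clear hg hi f).trans hr, hred⟩ ⟨hf, .inl rfl⟩
    exact h.trans hr
  intro f hfW hf0
  -- Generalizing over `h` makes the property additive in the element of the span.
  have hadd : ∀ h, ReducesTo G h 0 → ReducesTo G (f + h) 0 := by
    rw [← hspan] at hfW
    clear hf0
    induction hfW using Submodule.closure_induction with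
    | zero => simp
    | add x y _ _ hx hy =>
      intro h hh
      rw [add_assoc]
      exact hx _ (hy _ hh)
    | smul_mem c g hg => exact fun h => add_smul_reduces g hg c h
  have hred : ReducesTo G f 0 := by simpa using hadd 0 .refl
  obtain ⟨i, hi⟩ := exists_isLp hf0
  by_contra hcon
  push Not at hcon
  exact (isLp_of_reducesTo hi (fun g hg => hcon g hg i hi) hred).1 rfl
end

section
/- Let Δ be a translation quiver and x, y vertices such that every path from x to y is closed, and fix a mesh-lexicographic order on the set of paths from x to y. For m ∈ ℕ let R(x,y)_m denote the set of mesh-canonical relations between x and y of length m, i.e. those of the form γ_2 m_z γ_1 with length(γ_1) + 2 + length(γ_2) = m. Then R(x,y)_m is a Gröbner basis for the subspace of kΔ(x,y) it spans: every nonzero element f of that subspace satisfies lp(f) = lp(r) for some r ∈ R(x,y)_m. -/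
/-!
The proof is a linear version of Buchberger's criterion. All terms of relations of length `m` are
paths of length `m`; these are finite in number and totally ordered, so the order is given by a
rank function `lexRank` with values in `ℕ`. By `exists_lead_of_mem_lowSpan` it suffices that the
difference of two mesh-canonical relations with the same leading path is a combination of
relations all of whose terms are strictly smaller (`sub_mem_lowSpan`).

The leading term of `γ₂ m_z γ₁` passes through the `<_{γ₁}`-largest arrow starting at `z`. If two
relations have the same leading path, consider the positions of their two meshes on it.

* Same position: the relations are equal, because `τ` is injective.
* Positions differing by one (`no_overlap`): the common arrow is the smallest one at its source,
  since the order is mesh-lexicographic, and also the largest one there. Then its source has only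
  one outgoing arrow, while closedness of the path provides two immediate successors.
* Disjoint positions (`disjoint_case`): let `(i, j)` be the path using the `i`-th term of the first
  mesh and the `j`-th term of the second, and `(i₀, j₀)` the leading path. With
  `A j = ∑ i, (i, j)` and `B i = ∑ j, (i, j)` one has `∑ j, A j = ∑ i, B i`, hence
  `A j₀ - B i₀ = ∑_{i ≠ i₀} B i - ∑_{j ≠ j₀} A j`, and every term on the right is smaller than
  `(i₀, j₀)`. Only the choice of the largest arrow after the prefix through `i₀` matters, so it is
  harmless that the orders at the second mesh depend on `i`.
-/

/-!
Translation quivers, paths, mesh relations, mesh-canonical relations,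
(mesh-)lexicographic orders, walks and homotopy, following
Chaio–Le Meur–Trepode and Riedtmann/Bongartz–Gabriel.
-/

/-- A (locally finite) translation quiver: a quiver without loops with a partially
defined injective translation `tau` (defined exactly on the non-projective vertices;
the vertices outside its range are the injective ones) and, for every non-projective
vertex `w` and every vertex `u`, a bijection `sigma` from the arrows `u ⟶ w` to the
arrows `tau w ⟶ u`. -/
structure TranslationQuiver where
  V : Type
  Arrow : V → V → Type
  fintypeHom : ∀ a b : V, Fintype (Arrow a b)
  fintypeOut : ∀ a : V, Fintype ((b : V) × Arrow a b)
  fintypeIn : ∀ a : V, Fintype ((b : V) × Arrow b a)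
  noLoops : ∀ a : V, IsEmpty (Arrow a a)
  /-- `Proj x` means that the vertex `x` is projective. -/
  Proj : V → Prop
  tau : {x : V // ¬ Proj x} → V
  tau_inj : Function.Injective tau
  sigma : ∀ (w : {x : V // ¬ Proj x}) (u : V), Arrow u w.1 ≃ Arrow (tau w) u

attribute [instance] TranslationQuiver.fintypeHom TranslationQuiver.fintypeOut
  TranslationQuiver.fintypeIn

instance (T : TranslationQuiver) : Quiver T.V := ⟨T.Arrow⟩

namespace TranslationQuiver

/-- A vertex is injective iff it is not in the range of the translation. -/
def Inj (T : TranslationQuiver) (x : T.V) : Prop := x ∉ Set.range T.tau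

/-- `z` is a predecessor of `y` (there is a path `z ⇝ y`). -/
def PredOf (T : TranslationQuiver) (y z : T.V) : Prop := Nonempty (Quiver.Path z y)

/-- `u` has at least two immediate successors. -/
def TwoSucc (T : TranslationQuiver) (u : T.V) : Prop :=
  ∃ v v' : T.V, v ≠ v' ∧ Nonempty (T.Arrow u v) ∧ Nonempty (T.Arrow u v')

/-- The closedness condition for two consecutive arrows `u ⟶ v ⟶ w` of a path:
if `w` is non-projective and `τ w = u` then `u` must have at least two
immediate successors. -/
def ClosedCons (T : TranslationQuiver) {u v w : T.V}
    (_e₁ : T.Arrow u v) (_e₂ : T.Arrow v w) : Prop :=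
  ∀ hw : ¬ T.Proj w, T.tau ⟨w, hw⟩ = u → T.TwoSucc u

/-- A path is closed if every pair of consecutive arrows satisfies `ClosedCons`. -/
def Closed (T : TranslationQuiver) : ∀ {x y : T.V}, Quiver.Path x y → Prop
  | _, _, .nil => True
  | _, _, .cons .nil _ => True
  | _, _, .cons (.cons p e₁) e₂ =>
      Closed T (Quiver.Path.cons p e₁) ∧ T.ClosedCons e₁ e₂

/-- The list of vertices visited by a path (from the end vertex backwards). -/
def vertList (T : TranslationQuiver) : ∀ {x y : T.V}, Quiver.Path x y → List T.V
  | _, y, .nil => [y]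
  | _, y, .cons p _ => y :: vertList T p

/-- The length-two path `τ w ⟶ u ⟶ w` through the mesh ending at `w`
determined by an arrow `β : u ⟶ w`. -/
def meshPath (T : TranslationQuiver) {w : T.V} (hw : ¬ T.Proj w)
    (β : (u : T.V) × T.Arrow u w) : Quiver.Path (T.tau ⟨w, hw⟩) w :=
  (Quiver.Hom.toPath (T.sigma ⟨w, hw⟩ β.1 β.2)).cons β.2

/-- The set of mesh-canonical relations between `x` and `y` in `kΔ(x,y)`
(the vector space with basis the paths from `x` to `y`, modelled as finitely
supported functions on paths): the elements `γ₂ m_z γ₁` with `z = τ w`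
non-injective, `γ₁ : x ⇝ z` and `γ₂ : τ⁻¹ z = w ⇝ y`. -/
def MeshCanonical (T : TranslationQuiver) (k : Type) [Field k] (x y : T.V) :
    Set (Quiver.Path x y →₀ k) :=
  { r | ∃ (w : T.V) (hw : ¬ T.Proj w) (γ₁ : Quiver.Path x (T.tau ⟨w, hw⟩))
      (γ₂ : Quiver.Path w y),
      r = ∑ β : (u : T.V) × T.Arrow u w,
        Finsupp.single ((γ₁.comp (meshPath T hw β)).comp γ₂) (1 : k) }

/-- The mesh-canonical relations between `x` and `y` of length `m`. -/
def MeshCanonicalLen (T : TranslationQuiver) (k : Type) [Field k] (x y : T.V) (m : ℕ) :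
    Set (Quiver.Path x y →₀ k) :=
  { r | ∃ (w : T.V) (hw : ¬ T.Proj w) (γ₁ : Quiver.Path x (T.tau ⟨w, hw⟩))
      (γ₂ : Quiver.Path w y),
      γ₁.length + 2 + γ₂.length = m ∧
      r = ∑ β : (u : T.V) × T.Arrow u w,
        Finsupp.single ((γ₁.comp (meshPath T hw β)).comp γ₂) (1 : k) }

/-- The mesh-canonical relations derived from the mesh of `x = τ w`
(those of the form `γ₂ m_x` with `γ₂ : τ⁻¹ x = w ⇝ y`). -/
def MeshAtSet (T : TranslationQuiver) (k : Type) [Field k] {w : T.V}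
    (hw : ¬ T.Proj w) (y : T.V) : Set (Quiver.Path (T.tau ⟨w, hw⟩) y →₀ k) :=
  { r | ∃ γ₂ : Quiver.Path w y,
      r = ∑ β : (u : T.V) × T.Arrow u w,
        Finsupp.single ((meshPath T hw β).comp γ₂) (1 : k) }

/-- For `x = τ w` non-injective, an arrow `a = (α : x ⟶ v)` starting at `x` and
`s ∈ kΔ(w, y)`, the element `s_α = s (σ⁻¹ α) α` of `kΔ(x, y)`. -/
noncomputable def derComesh (T : TranslationQuiver) (k : Type) [Field k] {w : T.V}
    (hw : ¬ T.Proj w) {y : T.V} (a : (v : T.V) × T.Arrow (T.tau ⟨w, hw⟩) v)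
    (s : Quiver.Path w y →₀ k) : Quiver.Path (T.tau ⟨w, hw⟩) y →₀ k :=
  Finsupp.mapDomain
    (fun p => (((Quiver.Hom.toPath a.2).cons ((T.sigma ⟨w, hw⟩ a.1).symm a.2)).comp p)) s

/-- The arrows starting at `z`. -/
abbrev OutArrow (T : TranslationQuiver) (z : T.V) := (v : T.V) × T.Arrow z v

/-- A family of orders, one for each path `γ : x ⇝ z`, on the arrows starting at
the end vertex `z` of `γ`. -/
abbrev OFam (T : TranslationQuiver) (x : T.V) :=
  ∀ z : T.V, Quiver.Path x z → OutArrow T z → OutArrow T z → Prop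

/-- `O` is a family of (strict) total orders on the arrows starting at the
end vertices of paths `x ⇝ z` and ending at predecessors of `y`. -/
def IsOrderFamily (T : TranslationQuiver) (x y : T.V) (O : OFam T x) : Prop :=
  ∀ (z : T.V) (γ : Quiver.Path x z),
    (∀ a : OutArrow T z, ¬ O z γ a a) ∧
    (∀ a b c : OutArrow T z, O z γ a b → O z γ b c → O z γ a c) ∧
    (∀ a b : OutArrow T z, T.PredOf y a.1 → T.PredOf y b.1 → a ≠ b →
      O z γ a b ∨ O z γ b a)

/-- The lexicographic order on the paths from `x` to `y` induced by the family `O`: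
`δ < δ'` iff, `γ` being the longest common initial subpath of `δ` and `δ'` and
`a`, `a'` the arrows with which `δ`, `δ'` respectively continue after `γ`,
one has `a <_γ a'`. -/
def LexLt (T : TranslationQuiver) {x y : T.V} (O : OFam T x)
    (δ δ' : Quiver.Path x y) : Prop :=
  ∃ (z : T.V) (γ : Quiver.Path x z) (a a' : OutArrow T z)
    (δ₁ : Quiver.Path a.1 y) (δ₁' : Quiver.Path a'.1 y),
    a ≠ a' ∧ δ = (γ.cons a.2).comp δ₁ ∧ δ' = (γ.cons a'.2).comp δ₁' ∧ O z γ a a'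

/-- The order family `O` is mesh-lexicographic (for paths from `x` to `y`):
it is a family of total orders and, whenever `γ : x ⇝ z` with `z = τ w`
non-injective, `w = τ⁻¹ z` a predecessor of `y`, and `α : z ⟶ z'` the
`<_γ`-largest arrow starting at `z` and ending at a predecessor of `y`,
the arrow `σ⁻¹ α : z' ⟶ w` is `≤_{αγ} β` for every arrow `β : z' ⟶ v` with `v`
a predecessor of `y`. -/
def IsMeshLex (T : TranslationQuiver) (x y : T.V) (O : OFam T x) : Prop :=
  IsOrderFamily T x y O ∧
  ∀ (w : T.V) (hw : ¬ T.Proj w) (γ : Quiver.Path x (T.tau ⟨w, hw⟩))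
    (z' : T.V) (α : T.Arrow (T.tau ⟨w, hw⟩) z'),
    T.PredOf y w → T.PredOf y z' →
    (∀ b : OutArrow T (T.tau ⟨w, hw⟩), T.PredOf y b.1 →
      b ≠ ⟨z', α⟩ → O _ γ b ⟨z', α⟩) →
    ∀ (v : T.V) (β : T.Arrow z' v), T.PredOf y v →
      (⟨v, β⟩ : OutArrow T z') ≠ ⟨w, (T.sigma ⟨w, hw⟩ z').symm α⟩ →
      O z' (γ.cons α) ⟨w, (T.sigma ⟨w, hw⟩ z').symm α⟩ ⟨v, β⟩

/-- `p` is the leading basis element (the largest path occurring with nonzero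
coefficient) of `f ∈ kΔ(x,y)`, with respect to the lexicographic order induced
by the order family `O`. -/
def IsLpPath (T : TranslationQuiver) {k : Type} [Field k] {x y : T.V} (O : OFam T x)
    (f : Quiver.Path x y →₀ k) (p : Quiver.Path x y) : Prop :=
  f p ≠ 0 ∧ ∀ q : Quiver.Path x y, f q ≠ 0 → q ≠ p → LexLt T O q p

/-- Walks on a translation quiver: formal compositions of arrows and inverses
of arrows. -/
inductive Walk (T : TranslationQuiver) : T.V → T.V → Type
  | nil (a : T.V) : Walk T a a
  | consFwd {a b c : T.V} : Walk T a b → T.Arrow b c → Walk T a c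
  | consBwd {a b c : T.V} : Walk T a b → T.Arrow c b → Walk T a c

/-- Composition of walks. -/
def Walk.comp {T : TranslationQuiver} : ∀ {a b c : T.V}, Walk T a b → Walk T b c → Walk T a c
  | _, _, _, p, .nil _ => p
  | _, _, _, p, .consFwd q e => .consFwd (p.comp q) e
  | _, _, _, p, .consBwd q e => .consBwd (p.comp q) e

/-- A path is in particular a walk. -/
def pathToWalk (T : TranslationQuiver) : ∀ {a b : T.V}, Quiver.Path a b → Walk T a b
  | a, _, .nil => .nil a
  | _, _, .cons p e => .consFwd (pathToWalk T p) e

/-- Homotopy of walks: the smallest equivalence relation such that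
(a) `α α⁻¹ ∼ ε` and `α⁻¹ α ∼ ε`; (b) `α (σ α) ∼ α' (σ α')` for arrows `α, α'`
ending at a non-projective vertex; (c) it is compatible with composition; and
(d) `α ∼ β` for parallel arrows. -/
inductive Homotopic (T : TranslationQuiver) : ∀ {a b : T.V}, Walk T a b → Walk T a b → Prop
  | refl {a b : T.V} (p : Walk T a b) : Homotopic T p p
  | symm {a b : T.V} {p q : Walk T a b} : Homotopic T p q → Homotopic T q p
  | trans {a b : T.V} {p q r : Walk T a b} :
      Homotopic T p q → Homotopic T q r → Homotopic T p r
  | cancel_left {a b : T.V} (e : T.Arrow a b) :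
      Homotopic T (((Walk.nil a).consFwd e).consBwd e) (Walk.nil a)
  | cancel_right {a b : T.V} (e : T.Arrow a b) :
      Homotopic T (((Walk.nil b).consBwd e).consFwd e) (Walk.nil b)
  | mesh {w : T.V} (hw : ¬ T.Proj w) {u u' : T.V} (β : T.Arrow u w) (β' : T.Arrow u' w) :
      Homotopic T
        (((Walk.nil (T.tau ⟨w, hw⟩)).consFwd (T.sigma ⟨w, hw⟩ u β)).consFwd β)
        (((Walk.nil (T.tau ⟨w, hw⟩)).consFwd (T.sigma ⟨w, hw⟩ u' β')).consFwd β')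
  | comp_congr {a b c d : T.V} {p q : Walk T b c} (w₁ : Walk T a b) (w₂ : Walk T c d) :
      Homotopic T p q → Homotopic T ((w₁.comp p).comp w₂) ((w₁.comp q).comp w₂)
  | par {a b : T.V} (e e' : T.Arrow a b) :
      Homotopic T ((Walk.nil a).consFwd e) ((Walk.nil a).consFwd e')

end TranslationQuiver

namespace TranslationQuiver

open Quiver

/-! ### Linear Buchberger criterion -/

section Abstract

variable {P k : Type*} [Field k]

/-- `p` is the leading basis element of `r`, with coefficient one, for the order on basis
elements given by the rank function `rk`. -/
def MonicLead (rk : P → ℕ) (r : P →₀ k) (p : P) : Prop :=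
  r p = 1 ∧ ∀ q, q ≠ p → r q ≠ 0 → rk q < rk p

/-- The span of the elements of `R` all of whose basis elements have rank less than `n`. -/
noncomputable def lowSpan (rk : P → ℕ) (R : Set (P →₀ k)) (n : ℕ) : Submodule k (P →₀ k) :=
  Submodule.span k {s | s ∈ R ∧ ∀ q, s q ≠ 0 → rk q < n}

lemma lowSpan_rank_lt {rk : P → ℕ} {R : Set (P →₀ k)} {n : ℕ} {g : P →₀ k}
    (hg : g ∈ lowSpan rk R n) (q : P) (hq : g q ≠ 0) : rk q < n := by
  have h : lowSpan rk R n ≤ Finsupp.supported k k {q | rk q < n} := by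
    refine Submodule.span_le.2 ?_
    rintro s ⟨-, hs⟩
    intro q hq
    exact hs q (Finsupp.mem_support_iff.1 hq)
  exact h hg (Finsupp.mem_support_iff.2 hq)

/-- If the difference of two monic elements of `R` with the same leading basis element is always
a combination of elements of `R` of smaller rank, then `R` is a Gröbner basis of its span. -/
theorem exists_lead_of_mem_lowSpan (rk : P → ℕ) (S : Set P) (hinj : Set.InjOn rk S)
    (R : Set (P →₀ k)) (hsupp : ∀ r ∈ R, ∀ q, r q ≠ 0 → q ∈ S)
    (hR : ∀ r ∈ R, r = 0 ∨ ∃ p, MonicLead rk r p)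
    (hS : ∀ r ∈ R, ∀ r' ∈ R, ∀ p, MonicLead rk r p → MonicLead rk r' p →
      r - r' ∈ lowSpan rk R (rk p)) (n : ℕ) :
    ∀ f ∈ lowSpan rk R n, f ≠ 0 →
      ∃ r ∈ R, ∃ p, MonicLead rk r p ∧ f p ≠ 0 ∧ ∀ q, q ≠ p → f q ≠ 0 → rk q < rk p := by
  induction n with
  | zero =>
    intro f hf hf0
    exfalso
    apply hf0
    ext q
    by_contra hq
    exact absurd (lowSpan_rank_lt hf q hq) (Nat.not_lt_zero _)
  | succ n ih =>
    intro f hf hf0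
    by_cases hex : ∃ r₀ ∈ R, ∃ p, MonicLead rk r₀ p ∧ rk p = n
    · obtain ⟨r₀, hr₀, p, hp, hpn⟩ := hex
      have hle : lowSpan rk R (n + 1) ≤ Submodule.span k {r₀} ⊔ lowSpan rk R n := by
        refine Submodule.span_le.2 ?_
        rintro s ⟨hsR, hs⟩
        rcases hR s hsR with rfl | ⟨q, hq⟩
        · exact Submodule.zero_mem _
        · have hq1 : s q ≠ 0 := by rw [hq.1]; exact one_ne_zero
          rcases Nat.lt_succ_iff_lt_or_eq.1 (hs q hq1) with hlt | heq
          · refine Submodule.mem_sup_right (Submodule.subset_span ⟨hsR, fun q' hq' => ?_⟩)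
            by_cases h : q' = q
            · rw [h]; exact hlt
            · exact (hq.2 q' h hq').trans hlt
          · have hqp : q = p := by
              refine hinj (hsupp s hsR q hq1) (hsupp r₀ hr₀ p ?_) (heq.trans hpn.symm)
              rw [hp.1]; exact one_ne_zero
            subst hqp
            have h := hS s hsR r₀ hr₀ q hq hp
            rw [heq] at h
            have h2 : s = r₀ + (s - r₀) := by abel
            rw [SetLike.mem_coe, h2]
            exact Submodule.add_mem_sup (Submodule.mem_span_singleton_self _) h
      obtain ⟨a, ha, g, hg, rfl⟩ := Submodule.mem_sup.1 (hle hf)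
      obtain ⟨c, rfl⟩ := Submodule.mem_span_singleton.1 ha
      by_cases hc : c = 0
      · subst hc
        rw [zero_smul, zero_add] at hf0 ⊢
        exact ih g hg hf0
      · have hgp : g p = 0 := by
          by_contra h
          exact absurd (lowSpan_rank_lt hg p h) (by omega)
        refine ⟨r₀, hr₀, p, hp, ?_, ?_⟩
        · simpa [hgp, hp.1] using hc
        · intro q hqp hq
          by_cases h1 : g q = 0
          · apply hp.2 q hqp
            rintro h2
            exact hq (by simp [h1, h2])
          · rw [hpn]; exact lowSpan_rank_lt hg q h1
    · refine ih f (Submodule.span_mono ?_ hf) hf0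
      rintro s ⟨hsR, hs⟩
      refine ⟨hsR, fun q' hq' => ?_⟩
      rcases hR s hsR with rfl | ⟨q, hq⟩
      · exact absurd rfl hq'
      · have hq1 : s q ≠ 0 := by rw [hq.1]; exact one_ne_zero
        have hlt : rk q < n :=
          lt_of_le_of_ne (Nat.lt_succ_iff.1 (hs q hq1)) (fun h => hex ⟨s, hsR, q, hq, h⟩)
        by_cases h : q' = q
        · rw [h]; exact hlt
        · exact (hq.2 q' h hq').trans hlt

end Abstract

/-! ### Splitting and comparing paths -/

section Paths

variable {V : Type*} [Quiver V]

lemma comp_split {a b c d : V} (p : Path a b) (q : Path b d) (p' : Path a c) (q' : Path c d)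
    (h : p.comp q = p'.comp q') :
    (∃ r : Path b c, p' = p.comp r ∧ q = r.comp q') ∨
      (∃ r : Path c b, p = p'.comp r ∧ q' = r.comp q) := by
  induction q with
  | nil => exact Or.inr ⟨q', h, rfl⟩
  | cons q e ih =>
    cases q' with
    | nil => exact Or.inl ⟨q.cons e, h.symm, rfl⟩
    | cons q' e' =>
      rw [Path.comp_cons, Path.comp_cons] at h
      obtain rfl := Path.obj_eq_of_cons_eq_cons h
      obtain rfl := eq_of_heq (Path.hom_heq_of_cons_eq_cons h)
      rcases ih q' (eq_of_heq (Path.heq_of_cons_eq_cons h)) with ⟨r, h1, h2⟩ | ⟨r, h1, h2⟩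
      · exact Or.inl ⟨r, h1, by rw [h2, Path.comp_cons]⟩
      · exact Or.inr ⟨r, h1, by rw [h2, Path.comp_cons]⟩

/-- Case analysis on the position of the end of `t` in a path `t X = (e₁ e₂) g`. -/
lemma two_step_cases {a b d y : V} (e₁ : a ⟶ b) (e₂ : b ⟶ d) (g : Path d y)
    (C : ∀ c : V, Path a c → Path c y → Prop)
    (h0 : C a Path.nil ((e₁.toPath.cons e₂).comp g))
    (h1 : C b e₁.toPath (e₂.toPath.comp g))
    (h2 : ∀ (c : V) (s : Path d c) (X : Path c y), g = s.comp X →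
      C c ((e₁.toPath.cons e₂).comp s) X)
    (c : V) (t : Path a c) (X : Path c y) (h : (e₁.toPath.cons e₂).comp g = t.comp X) :
    C c t X := by
  rcases comp_split _ _ _ _ h with ⟨r, rfl, hg⟩ | ⟨r, hr, rfl⟩
  · exact h2 c r X hg
  · cases r with
    | nil =>
      rw [Path.comp_nil] at hr
      subst hr
      rw [Path.nil_comp]
      exact h2 _ Path.nil g (Path.nil_comp g).symm
    | cons r e =>
      rw [Path.comp_cons] at hr
      obtain rfl := Path.obj_eq_of_cons_eq_cons hr
      obtain rfl := eq_of_heq (Path.hom_heq_of_cons_eq_cons hr)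
      have hr' := eq_of_heq (Path.heq_of_cons_eq_cons hr)
      cases r with
      | nil =>
        rw [Path.comp_nil] at hr'
        subst hr'
        exact h1
      | cons r e' =>
        rw [Path.comp_cons] at hr'
        obtain rfl := Path.obj_eq_of_cons_eq_cons hr'
        obtain rfl := eq_of_heq (Path.hom_heq_of_cons_eq_cons hr')
        have hr'' := eq_of_heq (Path.heq_of_cons_eq_cons hr')
        cases t with
        | nil =>
          rw [Path.nil_comp] at hr''
          subst hr''
          exact h0
        | cons t f =>
          have := congrArg Path.length hr''
          simp [Path.length_comp] at this
          omega

lemma cons_comp_arrow_eq {x z y : V} (g : Path x z) {b b' : V} (e : z ⟶ b) (e' : z ⟶ b')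
    (p : Path b y) (p' : Path b' y) (h : (g.cons e).comp p = (g.cons e').comp p') :
    (⟨b, e⟩ : (v : V) × (z ⟶ v)) = ⟨b', e'⟩ := by
  have key : ∀ (b b' : V) (e : z ⟶ b) (e' : z ⟶ b') (r : Path b b'),
      g.cons e' = (g.cons e).comp r → (⟨b, e⟩ : (v : V) × (z ⟶ v)) = ⟨b', e'⟩ := by
    intro b b' e e' r hr
    cases r with
    | nil =>
      rw [Path.comp_nil] at hr
      rw [eq_of_heq (Path.hom_heq_of_cons_eq_cons hr)]
    | cons r f =>
      have := congrArg Path.length hr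
      simp [Path.length_comp] at this
      omega
  rcases comp_split _ _ _ _ h with ⟨r, hr, -⟩ | ⟨r, hr, -⟩
  · exact key _ _ _ _ r hr
  · exact (key _ _ _ _ r hr).symm

/-- Two paths of equal length starting at `x` either coincide or diverge after a longest common
initial subpath. -/
lemma eq_or_diverge {x u : V} (p : Path x u) : ∀ {v : V} (q : Path x v), p.length = q.length →
    ((⟨u, p⟩ : (v : V) × Path x v) = ⟨v, q⟩) ∨
      ∃ (z : V) (g : Path x z) (a a' : (v : V) × (z ⟶ v)) (d : Path a.1 u) (d' : Path a'.1 v),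
        a ≠ a' ∧ p = (g.cons a.2).comp d ∧ q = (g.cons a'.2).comp d' := by
  induction p with
  | nil =>
    intro v q h
    cases q with
    | nil => exact Or.inl rfl
    | cons q f => simp at h
  | @cons b c p e ih =>
    intro v q h
    cases q with
    | nil => simp at h
    | @cons b' _ q f =>
      rcases ih q (by simpa using h) with h | ⟨z, g, a, a', d, d', hne, h1, h2⟩
      · cases h
        by_cases hef : (⟨c, e⟩ : (v : V) × (b ⟶ v)) = ⟨v, f⟩
        · cases hef
          exact Or.inl rfl
        · exact Or.inr ⟨b, p, ⟨c, e⟩, ⟨v, f⟩, Path.nil, Path.nil, hef, rfl, rfl⟩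
      · exact Or.inr ⟨z, g, a, a', d.cons e, d'.cons f, hne, by rw [h1]; rfl, by rw [h2]; rfl⟩

end Paths

variable {T : TranslationQuiver}

lemma finite_paths_from (x : T.V) (n : ℕ) :
    {p : (v : T.V) × Path x v | p.2.length = n}.Finite := by
  induction n with
  | zero =>
    refine (Set.finite_singleton (⟨x, Path.nil⟩ : (v : T.V) × Path x v)).subset ?_
    rintro ⟨v, p⟩ hp
    cases p with
    | nil => rfl
    | cons p e => simp at hp
  | succ n ih =>
    refine (ih.biUnion (t := fun p => Set.range
      (fun a : OutArrow T p.1 => (⟨a.1, p.2.cons a.2⟩ : (v : T.V) × Path x v)))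
      (fun p _ => Set.finite_range _)).subset ?_
    rintro ⟨v, p⟩ hp
    cases p with
    | nil => simp at hp
    | @cons b _ p e =>
      simp only [Set.mem_iUnion]
      exact ⟨⟨b, p⟩, by simpa using hp, ⟨v, e⟩, rfl⟩

lemma finite_paths (x y : T.V) (n : ℕ) : {p : Path x y | p.length = n}.Finite := by
  refine ((finite_paths_from x n).preimage (f := fun p : Path x y => ⟨y, p⟩) ?_)
  intro p _ q _ h
  simpa using h

/-! ### The lexicographic order -/

lemma lexLt_irrefl {x y : T.V} {O : OFam T x} (p : Path x y) : ¬ LexLt T O p p := by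
  rintro ⟨z, g, ⟨b, e⟩, ⟨b', e'⟩, d, d', hne, h1, h2, -⟩
  exact hne (cons_comp_arrow_eq g e e' d d' (h1.symm.trans h2))

lemma lexLt_trans {x y : T.V} {O : OFam T x} (hO : IsOrderFamily T x y O) {p q r : Path x y}
    (hpq : LexLt T O p q) (hqr : LexLt T O q r) : LexLt T O p r := by
  obtain ⟨z, g, a, ⟨b, e⟩, d, d', hne, hp, hq, ho⟩ := hpq
  obtain ⟨z', g', ⟨c, f⟩, a', s, s', hne', hq₂, hr, ho'⟩ := hqr
  have h : (g.cons e).comp d' = (g'.cons f).comp s := hq.symm.trans hq₂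
  -- The three positions of the two branching points on the middle path `q`.
  have key : (∃ t : Path b z', g' = (g.cons e).comp t) ∨ (∃ t : Path c z, g = (g'.cons f).comp t) ∨
      (⟨b, g.cons e⟩ : (v : T.V) × Path x v) = ⟨c, g'.cons f⟩ := by
    rcases comp_split _ _ _ _ h with ⟨t, ht, -⟩ | ⟨t, ht, -⟩
    · cases t with
      | nil => exact Or.inr (Or.inr (by rw [ht]; rfl))
      | cons t i =>
        rw [Path.comp_cons] at ht
        obtain rfl := Path.obj_eq_of_cons_eq_cons ht
        exact Or.inl ⟨t, eq_of_heq (Path.heq_of_cons_eq_cons ht)⟩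
    · cases t with
      | nil => exact Or.inr (Or.inr (by rw [ht]; rfl))
      | cons t i =>
        rw [Path.comp_cons] at ht
        obtain rfl := Path.obj_eq_of_cons_eq_cons ht
        exact Or.inr (Or.inl ⟨t, eq_of_heq (Path.heq_of_cons_eq_cons ht)⟩)
  rcases key with ⟨t, rfl⟩ | ⟨t, rfl⟩ | hk
  · refine ⟨z, g, a, ⟨b, e⟩, d, (t.cons a'.2).comp s', hne, hp, ?_, ho⟩
    rw [hr, ← Path.comp_cons, Path.comp_assoc]
  · refine ⟨z', g', ⟨c, f⟩, a', (t.cons a.2).comp d, s', hne', ?_, hr, ho'⟩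
    rw [hp, ← Path.comp_cons, Path.comp_assoc]
  · obtain ⟨rfl, hk⟩ := Sigma.mk.inj_iff.1 hk
    have hk := eq_of_heq hk
    obtain rfl := Path.obj_eq_of_cons_eq_cons hk
    obtain rfl := eq_of_heq (Path.heq_of_cons_eq_cons hk)
    obtain rfl := eq_of_heq (Path.hom_heq_of_cons_eq_cons hk)
    have ho'' := (hO z g).2.1 _ _ _ ho ho'
    refine ⟨z, g, a, a', d, s', ?_, hp, hr, ho''⟩
    rintro rfl
    exact (hO z g).1 _ ho''

lemma lexLt_total {x y : T.V} {O : OFam T x} (hO : IsOrderFamily T x y O) {p q : Path x y}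
    (hl : p.length = q.length) (hne : p ≠ q) : LexLt T O p q ∨ LexLt T O q p := by
  rcases eq_or_diverge p q hl with h | ⟨z, g, a, a', d, d', ha, hp, hq⟩
  · exact absurd (by simpa using h) hne
  · rcases (hO z g).2.2 a a' ⟨d⟩ ⟨d'⟩ ha with h | h
    · exact Or.inl ⟨z, g, a, a', d, d', ha, hp, hq, h⟩
    · exact Or.inr ⟨z, g, a', a, d', d, ha.symm, hq, hp, h⟩

/-- The number of paths of length `m` that are smaller than `p`; on paths of length `m` it
represents the lexicographic order by the order of `ℕ`. -/
noncomputable def lexRank {x y : T.V} (O : OFam T x) (m : ℕ) (p : Path x y) : ℕ :=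
  {q : Path x y | q.length = m ∧ LexLt T O q p}.ncard

lemma lexRank_lt {x y : T.V} {O : OFam T x} (hO : IsOrderFamily T x y O) {m : ℕ}
    {p q : Path x y} (hp : p.length = m) (h : LexLt T O p q) :
    lexRank O m p < lexRank O m q := by
  refine Set.ncard_lt_ncard ?_ ((finite_paths x y m).subset fun r hr => hr.1)
  refine ⟨fun r hr => ⟨hr.1, lexLt_trans hO hr.2 h⟩, fun hs => ?_⟩
  exact lexLt_irrefl p (hs ⟨hp, h⟩ : _ ∧ _).2

lemma lexLt_of_lexRank_lt {x y : T.V} {O : OFam T x} (hO : IsOrderFamily T x y O) {m : ℕ}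
    {p q : Path x y} (hp : p.length = m) (hq : q.length = m)
    (h : lexRank O m p < lexRank O m q) : LexLt T O p q := by
  have hne : p ≠ q := by rintro rfl; exact lt_irrefl _ h
  rcases lexLt_total hO (hp.trans hq.symm) hne with h' | h'
  · exact h'
  · exact absurd (lexRank_lt hO hq h') (by omega)

lemma lexRank_injOn {x y : T.V} {O : OFam T x} (hO : IsOrderFamily T x y O) (m : ℕ) :
    Set.InjOn (lexRank O m) {p : Path x y | p.length = m} := by
  intro p hp q hq h
  by_contra hne
  rcases lexLt_total hO (Eq.trans hp (Eq.symm hq)) hne with h' | h'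
  · exact absurd (lexRank_lt hO hp h') (by omega)
  · exact absurd (lexRank_lt hO hq h') (by omega)

/-! ### Meshes with a variable starting vertex -/

/-- The bijection `sigma`, with `τ w` replaced by a vertex `z` equal to it. -/
def sg {w z : T.V} {hw : ¬ T.Proj w} (hz : T.tau ⟨w, hw⟩ = z) (u : T.V) :
    T.Arrow u w ≃ T.Arrow z u :=
  hz ▸ T.sigma ⟨w, hw⟩ u

/-- The arrows ending at `w`. -/
abbrev InArrow (T : TranslationQuiver) (w : T.V) := (u : T.V) × T.Arrow u w

/-- The arrow `σ β`, bundled with its target. -/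
def outOf {w z : T.V} {hw : ¬ T.Proj w} (hz : T.tau ⟨w, hw⟩ = z) (β : InArrow T w) :
    OutArrow T z := ⟨β.1, sg hz β.1 β.2⟩

/-- The path `z ⟶ u ⟶ w` through the mesh from `z = τ w` to `w` given by `β : u ⟶ w`. -/
def mp {w z : T.V} {hw : ¬ T.Proj w} (hz : T.tau ⟨w, hw⟩ = z) (β : InArrow T w) : Path z w :=
  (Hom.toPath (sg hz β.1 β.2)).cons β.2

/-- The term of the mesh relation `γ₂ m_z γ₁` indexed by `β`. -/
def term {x y w z : T.V} {hw : ¬ T.Proj w} (hz : T.tau ⟨w, hw⟩ = z) (g₁ : Path x z)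
    (g₂ : Path w y) (β : InArrow T w) : Path x y :=
  (g₁.comp (mp hz β)).comp g₂

/-- The mesh-canonical relation `γ₂ m_z γ₁`. -/
noncomputable def rel (k : Type) [Field k] {x y w z : T.V} {hw : ¬ T.Proj w}
    (hz : T.tau ⟨w, hw⟩ = z) (g₁ : Path x z) (g₂ : Path w y) : Path x y →₀ k :=
  ∑ β : InArrow T w, Finsupp.single (term hz g₁ g₂ β) (1 : k)

lemma mem_meshCanonicalLen {k : Type} [Field k] {x y : T.V} {m : ℕ} {r : Path x y →₀ k} :
    r ∈ MeshCanonicalLen T k x y m ↔ ∃ (w z : T.V) (hw : ¬ T.Proj w) (hz : T.tau ⟨w, hw⟩ = z)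
      (g₁ : Path x z) (g₂ : Path w y), g₁.length + 2 + g₂.length = m ∧ r = rel k hz g₁ g₂ := by
  constructor
  · rintro ⟨w, hw, g₁, g₂, hl, hr⟩
    exact ⟨w, _, hw, rfl, g₁, g₂, hl, hr⟩
  · rintro ⟨w, z, hw, rfl, g₁, g₂, hl, hr⟩
    exact ⟨w, hw, g₁, g₂, hl, hr⟩

section Mesh

variable {x y w z : T.V} {hw : ¬ T.Proj w} (hz : T.tau ⟨w, hw⟩ = z)

lemma outOf_bijective : Function.Bijective (outOf hz) := by
  constructor
  · rintro ⟨u, b⟩ ⟨u', b'⟩ h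
    obtain ⟨rfl, h⟩ := Sigma.mk.inj_iff.1 h
    exact congrArg (Sigma.mk u) ((sg hz u).injective (eq_of_heq h))
  · rintro ⟨u, a⟩
    exact ⟨⟨u, (sg hz u).symm a⟩, by simp [outOf]⟩

lemma term_eq (g₁ : Path x z) (g₂ : Path w y) (β : InArrow T w) :
    term hz g₁ g₂ β = (g₁.cons (outOf hz β).2).comp ((Hom.toPath β.2).comp g₂) := by
  rw [term, ← Path.comp_assoc]
  rfl

lemma term_length (g₁ : Path x z) (g₂ : Path w y) (β : InArrow T w) :
    (term hz g₁ g₂ β).length = g₁.length + 2 + g₂.length := by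
  simp [term, mp, Path.length_comp]

lemma term_injective (g₁ : Path x z) (g₂ : Path w y) :
    Function.Injective (term hz g₁ g₂) := by
  intro β β' h
  rw [term_eq, term_eq] at h
  exact (outOf_bijective hz).1 (cons_comp_arrow_eq _ _ _ _ _ h)

lemma term_lexLt {O : OFam T x} (g₁ : Path x z) (g₂ g₂' : Path w y) {β β' : InArrow T w}
    (hne : β ≠ β') (h : O z g₁ (outOf hz β) (outOf hz β')) :
    LexLt T O (term hz g₁ g₂ β) (term hz g₁ g₂' β') :=
  ⟨z, g₁, outOf hz β, outOf hz β', _, _, (outOf_bijective hz).1.ne hne,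
    term_eq hz g₁ g₂ β, term_eq hz g₁ g₂' β', h⟩

variable {k : Type} [Field k]

lemma rel_term (g₁ : Path x z) (g₂ : Path w y) (β : InArrow T w) :
    rel k hz g₁ g₂ (term hz g₁ g₂ β) = 1 := by
  classical
  rw [rel, Finsupp.finsetSum_apply, Finset.sum_eq_single β]
  · simp
  · intro b _ hb
    exact Finsupp.single_eq_of_ne ((term_injective hz g₁ g₂).ne hb).symm
  · simp

lemma exists_of_rel_ne_zero {g₁ : Path x z} {g₂ : Path w y} {q : Path x y}
    (h : rel k hz g₁ g₂ q ≠ 0) : ∃ β, q = term hz g₁ g₂ β := by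
  classical
  rw [rel, Finsupp.finsetSum_apply] at h
  obtain ⟨β, -, hβ⟩ := Finset.exists_ne_zero_of_sum_ne_zero h
  refine ⟨β, ?_⟩
  by_contra hne
  exact hβ (Finsupp.single_eq_of_ne hne)

/-- `β` indexes the leading term of `γ₂ m_z γ₁`: the arrow `σ β` is the largest one
starting at `z`, after the path `γ₁`. -/
def IsMaxAt (O : OFam T x) (g₁ : Path x z) (β : InArrow T w) : Prop :=
  ∀ b : OutArrow T z, b ≠ outOf hz β → O z g₁ b (outOf hz β)

lemma exists_isMaxAt {O : OFam T x} (hO : IsOrderFamily T x y O) (g₁ : Path x z)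
    (g₂ : Path w y) [Nonempty (InArrow T w)] : ∃ β, IsMaxAt hz O g₁ β := by
  classical
  have hpred : ∀ b : OutArrow T z, T.PredOf y b.1 := by
    intro b
    obtain ⟨β, rfl⟩ := (outOf_bijective hz).2 b
    exact ⟨(Hom.toPath β.2).comp g₂⟩
  obtain ⟨hirr, htr, htot⟩ := hO z g₁
  let r : OutArrow T z → OutArrow T z → Prop := fun a b => O z g₁ b a
  have hwf : WellFounded r := by
    have : Std.Irrefl r := ⟨hirr⟩
    have : IsTrans _ r := ⟨fun a b c hab hbc => htr _ _ _ hbc hab⟩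
    exact Finite.wellFounded_of_trans_of_irrefl r
  obtain ⟨a, -, ha⟩ := hwf.has_min Set.univ
    ⟨outOf hz (Classical.arbitrary (InArrow T w)), trivial⟩
  obtain ⟨β, rfl⟩ := (outOf_bijective hz).2 a
  refine ⟨β, fun b hb => ?_⟩
  rcases htot b (outOf hz β) (hpred _) (hpred _) hb with h | h
  · exact h
  · exact absurd h (ha b trivial)

lemma monicLead_of_isMaxAt {O : OFam T x} (hO : IsOrderFamily T x y O) {m : ℕ} {g₁ : Path x z}
    {g₂ : Path w y} (hl : g₁.length + 2 + g₂.length = m) {β : InArrow T w}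
    (hβ : IsMaxAt hz O g₁ β) :
    MonicLead (lexRank O m) (rel k hz g₁ g₂) (term hz g₁ g₂ β) := by
  refine ⟨rel_term hz g₁ g₂ β, fun q hq h => ?_⟩
  obtain ⟨β', rfl⟩ := exists_of_rel_ne_zero hz h
  have hne : β' ≠ β := fun h => hq (by rw [h])
  exact lexRank_lt hO ((term_length ..).trans hl)
    (term_lexLt hz g₁ g₂ g₂ hne (hβ _ ((outOf_bijective hz).1.ne hne)))

lemma exists_isMaxAt_of_monicLead {O : OFam T x} (hO : IsOrderFamily T x y O) {m : ℕ}
    {g₁ : Path x z} {g₂ : Path w y} (hl : g₁.length + 2 + g₂.length = m) {p : Path x y}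
    (hp : MonicLead (lexRank O m) (rel k hz g₁ g₂) p) :
    ∃ β, IsMaxAt hz O g₁ β ∧ p = term hz g₁ g₂ β := by
  have hp0 : rel k hz g₁ g₂ p ≠ 0 := by rw [hp.1]; exact one_ne_zero
  obtain ⟨β', -⟩ := exists_of_rel_ne_zero hz hp0
  have : Nonempty (InArrow T w) := ⟨β'⟩
  obtain ⟨β, hβ⟩ := exists_isMaxAt hz hO g₁ g₂
  refine ⟨β, hβ, ?_⟩
  by_contra hne
  have hm := monicLead_of_isMaxAt (k := k) hz hO hl hβ
  have h1 := hm.2 p hne hp0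
  have h2 := hp.2 _ (Ne.symm hne) (by rw [hm.1]; exact one_ne_zero)
  omega

lemma closed_of_closed_cons {a b c : T.V} (p : Path a b) (e : T.Arrow b c)
    (h : T.Closed (p.cons e)) : T.Closed p := by
  cases p with
  | nil => simp [Closed]
  | cons p f =>
    rw [Closed] at h
    exact h.1

lemma twoSucc_of_closed (g₁ : Path x z) (g₂ : Path w y) (β : InArrow T w)
    (h : T.Closed (term hz g₁ g₂ β)) : T.TwoSucc z := by
  have key : ∀ {y : T.V} (g₂ : Path w y), T.Closed ((g₁.comp (mp hz β)).comp g₂) →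
      T.Closed (g₁.comp (mp hz β)) := by
    intro y g₂
    induction g₂ with
    | nil => exact id
    | cons g e ih => exact fun h => ih (closed_of_closed_cons _ _ h)
  have h' : T.Closed ((g₁.cons (sg hz β.1 β.2)).cons β.2) := key g₂ h
  rw [Closed] at h'
  exact h'.2 hw hz

end Mesh

/-! ### Overlaps of leading terms -/

section Overlap

variable {x y : T.V} {O : OFam T x}

/-- Two mesh relations whose leading terms agree cannot overlap in exactly one arrow: that
arrow would be both the smallest and the largest arrow leaving a vertex which, by closedness,
has two immediate successors. -/
lemma no_overlap (hO : IsMeshLex T x y O) (hclosed : ∀ p : Path x y, T.Closed p)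
    {w z w' u : T.V} {hw : ¬ T.Proj w} {hw' : ¬ T.Proj w'} (hz : T.tau ⟨w, hw⟩ = z)
    (hz' : T.tau ⟨w', hw'⟩ = u) (g₁ : Path x z) (g₂ : Path w y) (g₂' : Path w' y)
    (b : T.Arrow u w) (β' : InArrow T w') (hmax : IsMaxAt hz O g₁ ⟨u, b⟩)
    (hmax' : IsMaxAt hz' O (g₁.cons (sg hz u b)) β')
    (h : (mp hz' β').comp g₂' = (Hom.toPath b).comp g₂) : False := by
  have hfirst : outOf hz' β' = (⟨w, b⟩ : OutArrow T u) := by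
    refine cons_comp_arrow_eq (Path.nil : Path u u) _ _ ((Hom.toPath β'.2).comp g₂') g₂ ?_
    refine Eq.trans ?_ h
    exact (term_eq hz' Path.nil g₂' β').symm.trans (by rw [term, Path.nil_comp])
  have hmin : ∀ a : OutArrow T u, a ≠ ⟨w, b⟩ → O u (g₁.cons (sg hz u b)) ⟨w, b⟩ a := by
    intro a ha
    obtain ⟨β'', hβ''⟩ := (outOf_bijective hz').2 a
    have hpa : T.PredOf y a.1 := by
      rw [← hβ'']
      exact ⟨(Hom.toPath β''.2).comp g₂'⟩
    subst hz
    have := hO.2 w hw g₁ u (T.sigma ⟨w, hw⟩ u b) ⟨g₂⟩ ⟨(Hom.toPath b).comp g₂⟩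
      (fun c _ hc => hmax c hc) a.1 a.2 hpa (by rw [Equiv.symm_apply_apply]; exact ha)
    rw [Equiv.symm_apply_apply] at this
    exact this
  have huniq : ∀ a : OutArrow T u, a = ⟨w, b⟩ := by
    intro a
    by_contra ha
    have h1 := hmin a ha
    have h2 := hmax' a (by rw [hfirst]; exact ha)
    rw [hfirst] at h2
    exact (hO.1 _ _).1 _ ((hO.1 _ _).2.1 _ _ _ h1 h2)
  obtain ⟨v, v', hne, ⟨e⟩, ⟨e'⟩⟩ :=
    twoSucc_of_closed hz' (g₁.cons (sg hz u b)) g₂' β' (hclosed _)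
  exact hne (congrArg Sigma.fst ((huniq ⟨v, e⟩).trans (huniq ⟨v', e'⟩).symm))

variable {k : Type} [Field k]

/-- Two mesh relations at disjoint positions of their common leading term: the double sum over
both meshes can be evaluated in two ways, which expresses the difference of the two relations by
relations with smaller terms. -/
lemma disjoint_case (hO : IsMeshLex T x y O) {m : ℕ}
    {w z w' c : T.V} {hw : ¬ T.Proj w} {hw' : ¬ T.Proj w'} (hz : T.tau ⟨w, hw⟩ = z)
    (hz' : T.tau ⟨w', hw'⟩ = c) (g₁ : Path x z) (s : Path w c) (g₂' : Path w' y)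
    (β : InArrow T w) (β' : InArrow T w')
    (hl : g₁.length + 2 + s.length + 2 + g₂'.length = m) (hmax : IsMaxAt hz O g₁ β)
    (hmax' : IsMaxAt hz' O (g₁.comp ((mp hz β).comp s)) β') :
    rel k hz g₁ (s.comp ((mp hz' β').comp g₂')) - rel k hz' (g₁.comp ((mp hz β).comp s)) g₂' ∈
      lowSpan (lexRank O m) (MeshCanonicalLen T k x y m)
        (lexRank O m (term hz g₁ (s.comp ((mp hz' β').comp g₂')) β)) := by
  classical
  let A : InArrow T w' → (Path x y →₀ k) := fun j => rel k hz g₁ (s.comp ((mp hz' j).comp g₂'))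
  let B : InArrow T w → (Path x y →₀ k) := fun i => rel k hz' (g₁.comp ((mp hz i).comp s)) g₂'
  have hterm : ∀ i j, term hz g₁ (s.comp ((mp hz' j).comp g₂')) i =
      term hz' (g₁.comp ((mp hz i).comp s)) g₂' j := by
    intro i j
    simp only [term, Path.comp_assoc]
  have hAB : ∑ j, A j = ∑ i, B i := by
    simp only [A, B, rel, hterm]
    exact Finset.sum_comm
  have hAl : ∀ j, g₁.length + 2 + (s.comp ((mp hz' j).comp g₂')).length = m := by
    intro j
    simp only [mp, Path.length_comp, Path.length_cons, Path.length_toPath]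
    omega
  have hBl : ∀ i, (g₁.comp ((mp hz i).comp s)).length + 2 + g₂'.length = m := by
    intro i
    simp only [mp, Path.length_comp, Path.length_cons, Path.length_toPath]
    omega
  -- Terms with a smaller index at the first mesh, whatever happens at the second one.
  have hfst : ∀ i j, i ≠ β → lexRank O m (term hz g₁ (s.comp ((mp hz' j).comp g₂')) i) <
      lexRank O m (term hz g₁ (s.comp ((mp hz' β').comp g₂')) β) := fun i j hi =>
    lexRank_lt hO.1 ((term_length ..).trans (hAl j))
      (term_lexLt hz g₁ _ _ hi (hmax _ ((outOf_bijective hz).1.ne hi)))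
  have hA : ∀ j, j ≠ β' → A j ∈ lowSpan (lexRank O m) (MeshCanonicalLen T k x y m)
        (lexRank O m (term hz g₁ (s.comp ((mp hz' β').comp g₂')) β)) := by
    intro j hj
    refine Submodule.subset_span
      ⟨mem_meshCanonicalLen.2 ⟨w, z, hw, hz, g₁, _, hAl j, rfl⟩, fun q hq => ?_⟩
    obtain ⟨i, rfl⟩ := exists_of_rel_ne_zero hz hq
    by_cases hi : i = β
    · subst hi
      rw [hterm, hterm]
      exact lexRank_lt hO.1 ((term_length ..).trans (hBl i))
        (term_lexLt hz' _ _ _ hj (hmax' _ ((outOf_bijective hz').1.ne hj)))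
    · exact hfst i j hi
  have hB : ∀ i, i ≠ β → B i ∈ lowSpan (lexRank O m) (MeshCanonicalLen T k x y m)
        (lexRank O m (term hz g₁ (s.comp ((mp hz' β').comp g₂')) β)) := by
    intro i hi
    refine Submodule.subset_span
      ⟨mem_meshCanonicalLen.2 ⟨w', c, hw', hz', _, g₂', hBl i, rfl⟩, fun q hq => ?_⟩
    obtain ⟨j, rfl⟩ := exists_of_rel_ne_zero hz' hq
    rw [← hterm]
    exact hfst i j hi
  have hAsum := Finset.add_sum_erase Finset.univ A (Finset.mem_univ β')
  have hBsum := Finset.add_sum_erase Finset.univ B (Finset.mem_univ β)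
  have hdiff : A β' - B β = ∑ i ∈ Finset.univ.erase β, B i - ∑ j ∈ Finset.univ.erase β', A j := by
    rw [sub_eq_sub_iff_add_eq_add, hAsum, hAB, ← hBsum, add_comm]
  change A β' - B β ∈ _
  rw [hdiff]
  exact Submodule.sub_mem _
    (Submodule.sum_mem _ fun i hi => hB i (Finset.ne_of_mem_erase hi))
    (Submodule.sum_mem _ fun j hj => hA j (Finset.ne_of_mem_erase hj))

/-- The difference of two mesh relations with the same leading term, the first mesh occurring
not later than the second one. -/
lemma sub_mem_of_le (hO : IsMeshLex T x y O) (hclosed : ∀ p : Path x y, T.Closed p) {m : ℕ}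
    {w z w' c : T.V} {hw : ¬ T.Proj w} {hw' : ¬ T.Proj w'} (hz : T.tau ⟨w, hw⟩ = z)
    (g₁ : Path x z) (g₂ : Path w y) (g₂' : Path w' y) (β : InArrow T w) (β' : InArrow T w')
    (hl : g₁.length + 2 + g₂.length = m) (hmax : IsMaxAt hz O g₁ β)
    (t : Path z c) (hz' : T.tau ⟨w', hw'⟩ = c) (hmax' : IsMaxAt hz' O (g₁.comp t) β')
    (h : (mp hz β).comp g₂ = t.comp ((mp hz' β').comp g₂')) :
    rel k hz g₁ g₂ - rel k hz' (g₁.comp t) g₂' ∈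
      lowSpan (lexRank O m) (MeshCanonicalLen T k x y m) (lexRank O m (term hz g₁ g₂ β)) := by
  refine two_step_cases (sg hz β.1 β.2) β.2 g₂ (fun c t X =>
    ∀ (hz' : T.tau ⟨w', hw'⟩ = c), IsMaxAt hz' O (g₁.comp t) β' → X = (mp hz' β').comp g₂' →
      rel k hz g₁ g₂ - rel k hz' (g₁.comp t) g₂' ∈
      lowSpan (lexRank O m) (MeshCanonicalLen T k x y m) (lexRank O m (term hz g₁ g₂ β)))
    ?_ ?_ ?_ c t _ h hz' hmax' rfl
  · intro hz' hmax' hX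
    obtain rfl : w = w' := congrArg Subtype.val (T.tau_inj (hz.trans hz'.symm))
    have hX' : term hz Path.nil g₂ β = term hz Path.nil g₂' β' := by
      rw [term, term, Path.nil_comp, Path.nil_comp]
      exact hX
    have hββ : β = β' := by
      rw [term_eq, term_eq] at hX'
      exact (outOf_bijective hz).1 (cons_comp_arrow_eq _ _ _ _ _ hX')
    subst hββ
    have hg : g₂ = g₂' := Path.comp_injective_right _ hX
    subst hg
    rw [Path.comp_nil, sub_self]
    exact Submodule.zero_mem _
  · intro hz' hmax' hX
    exact (no_overlap hO hclosed hz hz' g₁ g₂ g₂' β.2 β' hmax hmax' hX.symm).elim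
  · rintro c s X rfl hz' hmax' rfl
    refine disjoint_case hO hz hz' g₁ s g₂' β β' ?_ hmax hmax'
    rw [← hl]
    simp only [mp, Path.length_comp, Path.length_cons, Path.length_toPath]
    omega

lemma sub_mem_lowSpan (hO : IsMeshLex T x y O) (hclosed : ∀ p : Path x y, T.Closed p) {m : ℕ}
    {r r' : Path x y →₀ k} (hr : r ∈ MeshCanonicalLen T k x y m)
    (hr' : r' ∈ MeshCanonicalLen T k x y m) {p : Path x y}
    (hp : MonicLead (lexRank O m) r p) (hp' : MonicLead (lexRank O m) r' p) :
    r - r' ∈ lowSpan (lexRank O m) (MeshCanonicalLen T k x y m) (lexRank O m p) := by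
  obtain ⟨w, z, hw, hz, g₁, g₂, hl, rfl⟩ := mem_meshCanonicalLen.1 hr
  obtain ⟨w', z', hw', hz', g₁', g₂', hl', rfl⟩ := mem_meshCanonicalLen.1 hr'
  obtain ⟨β, hmax, hpβ⟩ := exists_isMaxAt_of_monicLead hz hO.1 hl hp
  obtain ⟨β', hmax', hpβ'⟩ := exists_isMaxAt_of_monicLead hz' hO.1 hl' hp'
  have h := hpβ.symm.trans hpβ'
  rw [term, term, Path.comp_assoc, Path.comp_assoc] at h
  rcases comp_split _ _ _ _ h with ⟨t, rfl, ht⟩ | ⟨t, rfl, ht⟩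
  · rw [hpβ]
    exact sub_mem_of_le hO hclosed hz g₁ g₂ g₂' β β' hl hmax t hz' hmax' ht
  · rw [hpβ', ← neg_sub]
    exact Submodule.neg_mem _
      (sub_mem_of_le hO hclosed hz' g₁' g₂' g₂ β' β hl' hmax' t hz hmax ht)

end Overlap

end TranslationQuiver

open TranslationQuiver in
/-- The mesh-canonical relations of a fixed length `m` form a Gröbner basis for
the subspace of `kΔ(x,y)` that they span. -/
theorem meshCanonicalLen_isGroebner (T : TranslationQuiver)
    (k : Type) [Field k] (x y : T.V) (m : ℕ)
    (hclosed : ∀ p : Quiver.Path x y, T.Closed p)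
    (hpre : ∀ (p q : Quiver.Path x y) (r : Quiver.Path y y), q = p.comp r → q = p)
    (O : OFam T x) (hO : IsMeshLex T x y O) :
    ∀ f ∈ Submodule.span k (MeshCanonicalLen T k x y m), f ≠ 0 →
      ∃ r ∈ MeshCanonicalLen T k x y m, ∃ p : Quiver.Path x y,
        IsLpPath T O f p ∧ IsLpPath T O r p := by
  intro f hf hf0
  have hsupp : ∀ r ∈ MeshCanonicalLen T k x y m, ∀ q, r q ≠ 0 →
      q ∈ {p : Quiver.Path x y | p.length = m} := by
    intro r hr q hq
    obtain ⟨w, z, hw, hz, g₁, g₂, hl, rfl⟩ := mem_meshCanonicalLen.1 hr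
    obtain ⟨β, rfl⟩ := exists_of_rel_ne_zero hz hq
    exact (term_length ..).trans hl
  have hR : ∀ r ∈ MeshCanonicalLen T k x y m, r = 0 ∨ ∃ p, MonicLead (lexRank O m) r p := by
    intro r hr
    obtain ⟨w, z, hw, hz, g₁, g₂, hl, rfl⟩ := mem_meshCanonicalLen.1 hr
    rcases isEmpty_or_nonempty (InArrow T w) with h | h
    · -- No arrow ends at `w`: the mesh relation is an empty sum.
      exact Or.inl (by simp [rel])
    · obtain ⟨β, hβ⟩ := exists_isMaxAt hz hO.1 g₁ g₂
      exact Or.inr ⟨_, monicLead_of_isMaxAt hz hO.1 hl hβ⟩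
  -- A common bound for the ranks of the finitely many paths of length `m`.
  obtain ⟨N, hN⟩ := ((finite_paths x y m).image (lexRank O m)).bddAbove
  have hfN : f ∈ lowSpan (lexRank O m) (MeshCanonicalLen T k x y m) (N + 1) := by
    refine Submodule.span_mono ?_ hf
    exact fun r hr => ⟨hr, fun q hq => Nat.lt_succ_iff.2 (hN ⟨q, hsupp r hr q hq, rfl⟩)⟩
  have hfS : f ∈ Finsupp.supported k k {p : Quiver.Path x y | p.length = m} := by
    have hle : Submodule.span k (MeshCanonicalLen T k x y m) ≤
        Finsupp.supported k k {p : Quiver.Path x y | p.length = m} :=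
      Submodule.span_le.2 fun r hr q hq => hsupp r hr q (Finsupp.mem_support_iff.1 hq)
    exact hle hf
  obtain ⟨r, hr, p, hrp, hfp, hlt⟩ := exists_lead_of_mem_lowSpan (lexRank O m)
    {p : Quiver.Path x y | p.length = m} (lexRank_injOn hO.1 m) (MeshCanonicalLen T k x y m)
    hsupp hR (fun r hr r' hr' p hp hp' => sub_mem_lowSpan hO hclosed hr hr' hp hp') (N + 1)
    f hfN hf0
  have hrp0 : r p ≠ 0 := by rw [hrp.1]; exact one_ne_zero
  have hpm := hsupp r hr p hrp0
  refine ⟨r, hr, p, ⟨hfp, fun q hq hqp => ?_⟩, ⟨hrp0, fun q hq hqp => ?_⟩⟩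
  · exact lexLt_of_lexRank_lt hO.1 (hfS (Finsupp.mem_support_iff.2 hq)) hpm (hlt q hqp hq)
  · exact lexLt_of_lexRank_lt hO.1 (hsupp r hr q hq) hpm (hrp.2 q hqp hq)
end
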